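/- Let U ⊆ ℂⁿ be an open set and a ∈ U. Suppose ξ¹, …, ξⁿ : U → ℂⁿ are holomorphic vector fields that pairwise commute and whose values ξ¹(a), …, ξⁿ(a) span ℂⁿ. Then there exist an open neighbourhood U₀ of 0 in ℂⁿ and an injective holomorphic map ψ : U₀ → U with ψ(0) = a, whose derivative (Dψ)_z is invertible at every z ∈ U₀ (so ψ is a biholomorphism onto an open neighbourhood of a), such that (Dψ)_z(e_k) = ξᵏ(ψ(z)) for all z ∈ U₀ and all k = 1, …, n, where e₁, …, eₙ is the standard basis of ℂⁿ. -/

import Mathlib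

open scoped Topology

/-- The continuous linear map `ℂⁿ → E` sending the `k`-th basis vector to `v k`. -/
noncomputable def frameMap {n : ℕ} {E : Type*} [NormedAddCommGroup E] [NormedSpace ℂ E]
    (v : Fin n → E) : (Fin n → ℂ) →L[ℂ] E :=
  ∑ k, (ContinuousLinearMap.proj (R := ℂ) (φ := fun _ : Fin n => ℂ) k).smulRight (v k)

lemma frameMap_apply {n : ℕ} {E : Type*} [NormedAddCommGroup E] [NormedSpace ℂ E]
    (v : Fin n → E) (c : Fin n → ℂ) : frameMap v c = ∑ k, c k • v k := by
  simp [frameMap]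

lemma frameMap_single {n : ℕ} {E : Type*} [NormedAddCommGroup E] [NormedSpace ℂ E]
    (v : Fin n → E) (k : Fin n) : frameMap v (Pi.single k 1) = v k := by
  rw [frameMap_apply, Finset.sum_eq_single k]
  · simp
  · intro b _ hb
    simp [hb]
  · simp

lemma isUnit_frameMap {n : ℕ} {v : Fin n → Fin n → ℂ}
    (hv : Submodule.span ℂ (Set.range v) = ⊤) : IsUnit (frameMap v) := by
  have hsurj : Function.Surjective (frameMap v).toLinearMap := by
    rw [← LinearMap.range_eq_top, eq_top_iff, ← hv, Submodule.span_le]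
    rintro _ ⟨k, rfl⟩
    exact ⟨Pi.single k 1, frameMap_single v k⟩
  have hbij : Function.Bijective (frameMap v).toLinearMap :=
    ⟨LinearMap.injective_iff_surjective.2 hsurj, hsurj⟩
  let e := (LinearEquiv.ofBijective _ hbij).toContinuousLinearEquiv
  refine ⟨(ContinuousLinearEquiv.unitsEquiv ℂ _).symm e, ?_⟩
  ext1
  rfl

lemma differentiableAt_frameMap {n : ℕ} {ξ : Fin n → (Fin n → ℂ) → (Fin n → ℂ)} {x : Fin n → ℂ}
    (hξ : ∀ k, DifferentiableAt ℂ (ξ k) x) :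
    DifferentiableAt ℂ (fun y => frameMap fun k => ξ k y) x := by
  unfold frameMap
  refine DifferentiableAt.fun_sum fun k _ => ?_
  exact (ContinuousLinearMap.smulRightL ℂ (Fin n → ℂ) (Fin n → ℂ)
    (ContinuousLinearMap.proj k)).differentiableAt.comp x (hξ k)

/-- The coframe dual to a frame of pairwise commuting vector fields is closed. -/
lemma fderiv_inverse_frameMap_symm {n : ℕ} {ξ : Fin n → (Fin n → ℂ) → (Fin n → ℂ)}
    {x : Fin n → ℂ} (hξ : ∀ k, DifferentiableAt ℂ (ξ k) x)
    (hunit : ∀ᶠ y in 𝓝 x, IsUnit (frameMap fun k => ξ k y))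
    (hcomm : ∀ k l, fderiv ℂ (ξ l) x (ξ k x) = fderiv ℂ (ξ k) x (ξ l x)) (v w : Fin n → ℂ) :
    fderiv ℂ (fun y => Ring.inverse (frameMap fun k => ξ k y)) x v w =
      fderiv ℂ (fun y => Ring.inverse (frameMap fun k => ξ k y)) x w v := by
  set A : (Fin n → ℂ) → (Fin n → ℂ) →L[ℂ] (Fin n → ℂ) := fun y => frameMap fun k => ξ k y with hA
  set ω : (Fin n → ℂ) → (Fin n → ℂ) →L[ℂ] (Fin n → ℂ) := fun y => Ring.inverse (A y)
  have hω : DifferentiableAt ℂ ω x := (differentiableAt_frameMap hξ).inverse hunit.self_of_nhds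
  have hdual (k : Fin n) : (fun y => ω y (ξ k y)) =ᶠ[𝓝 x] fun _ => Pi.single k 1 := by
    filter_upwards [hunit] with y hy
    have := congrArg (fun B => B (Pi.single k 1)) (Ring.inverse_mul_cancel _ hy)
    simpa [mul_apply_eq_comp, frameMap_single] using this
  have hder (k : Fin n) (u : Fin n → ℂ) :
      fderiv ℂ ω x u (ξ k x) = -ω x (fderiv ℂ (ξ k) x u) := by
    have h := (hω.hasFDerivAt.clm_apply (hξ k).hasFDerivAt).unique
      ((hasFDerivAt_const _ x).congr_of_eventuallyEq (hdual k))
    have h' := congrArg (fun B => B u) h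
    simp only [add_apply, ContinuousLinearMap.comp_apply,
      ContinuousLinearMap.flip_apply, zero_apply] at h'
    exact eq_neg_of_add_eq_zero_right h'
  have hexp (u : Fin n → ℂ) : u = ∑ k, ω x u k • ξ k x := by
    rw [← frameMap_apply]
    exact (congrArg (fun B => B u) (Ring.mul_inverse_cancel _ hunit.self_of_nhds)).symm
  rw [hexp v, hexp w]
  simp only [map_sum, map_smul, sum_apply, smul_apply,
    Finset.smul_sum, hder]
  rw [Finset.sum_comm]
  refine Finset.sum_congr rfl fun k _ => Finset.sum_congr rfl fun l _ => ?_
  rw [smul_comm, hcomm]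


/-- Let `U ⊆ ℂⁿ` be open and `a ∈ U`. Suppose `ξ¹, …, ξⁿ` are
holomorphic vector fields on `U` that pairwise commute and whose values at `a`
span `ℂⁿ`. Then there is an open neighbourhood `U₀` of `0` and an injective
holomorphic map `ψ : U₀ → U` with `ψ 0 = a`, with invertible derivative at every
point (so `ψ` is a biholomorphism onto an open neighbourhood of `a`), such that
`(Dψ)_z(e_k) = ξᵏ(ψ z)` for all `z ∈ U₀` and `k`. -/
theorem stmt_1 {n : ℕ} (U : Set (Fin n → ℂ)) (hUopen : IsOpen U)
    (a : Fin n → ℂ) (ha : a ∈ U)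
    (ξ : Fin n → ((Fin n → ℂ) → (Fin n → ℂ)))
    (hξ : ∀ k, DifferentiableOn ℂ (ξ k) U)
    (hcomm : ∀ k l, ∀ z ∈ U,
      fderiv ℂ (ξ l) z (ξ k z) - fderiv ℂ (ξ k) z (ξ l z) = 0)
    (hspan : Submodule.span ℂ (Set.range fun k => ξ k a) = ⊤) :
    ∃ (U₀ : Set (Fin n → ℂ)) (ψ : (Fin n → ℂ) → (Fin n → ℂ)),
      IsOpen U₀ ∧ (0 : Fin n → ℂ) ∈ U₀ ∧ ψ 0 = a ∧
      Set.MapsTo ψ U₀ U ∧ Set.InjOn ψ U₀ ∧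
      DifferentiableOn ℂ ψ U₀ ∧
      IsOpen (ψ '' U₀) ∧
      (∀ z ∈ U₀, Function.Bijective (fderiv ℂ ψ z)) ∧
      (∀ z ∈ U₀, ∀ k : Fin n, fderiv ℂ ψ z (Pi.single k 1) = ξ k (ψ z)) := by
  set A : (Fin n → ℂ) → (Fin n → ℂ) →L[ℂ] (Fin n → ℂ) := fun y => frameMap fun k => ξ k y
  set ω : (Fin n → ℂ) → (Fin n → ℂ) →L[ℂ] (Fin n → ℂ) := fun y => Ring.inverse (A y) with hω_def
  have hdiff {x} (hx : x ∈ U) (k : Fin n) : DifferentiableAt ℂ (ξ k) x :=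
    (hξ k).differentiableAt (hUopen.mem_nhds hx)
  have hnhds : {x | x ∈ U ∧ IsUnit (A x)} ∈ 𝓝 a :=
    Filter.inter_mem (hUopen.mem_nhds ha)
      ((differentiableAt_frameMap (hdiff ha)).continuousAt.preimage_mem_nhds
        (Units.isOpen.mem_nhds (isUnit_frameMap hspan)))
  obtain ⟨r, hr, hball⟩ := Metric.mem_nhds_iff.1 hnhds
  have haB : a ∈ Metric.ball a r := Metric.mem_ball_self hr
  have hω {x} (hx : x ∈ Metric.ball a r) : DifferentiableAt ℂ ω x :=
    (differentiableAt_frameMap (hdiff (hball hx).1)).inverse (hball hx).2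
  obtain ⟨f, hf⟩ : ∃ f : (Fin n → ℂ) → (Fin n → ℂ), ∀ x ∈ Metric.ball a r,
      HasFDerivWithinAt f (ω x) (Metric.ball a r) x := by
    refine (convex_ball a r).exists_forall_hasFDerivWithinAt_of_hasFDerivWithinAt_symmetric
      (dω := fun x => (fderiv ℂ ω x).restrictScalars ℝ)
      (fun x hx => ((hω hx).hasFDerivAt.restrictScalars ℝ).hasFDerivWithinAt) ?_
    intro x hx v _ w _
    refine fderiv_inverse_frameMap_symm (hdiff (hball hx).1) ?_ ?_ v w
    · filter_upwards [Metric.isOpen_ball.mem_nhds hx] with y hy using (hball hy).2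
    · exact fun k l => sub_eq_zero.1 (hcomm k l x (hball hx).1)
  have hφ {x} (hx : x ∈ Metric.ball a r) : HasFDerivAt (fun y => f y - f a) (ω x) x :=
    ((hf x hx).hasFDerivAt (Metric.isOpen_ball.mem_nhds hx)).sub_const _
  have hequiv {x} (hx : x ∈ Metric.ball a r) : ∃ L : (Fin n → ℂ) ≃L[ℂ] (Fin n → ℂ),
      (L : (Fin n → ℂ) →L[ℂ] (Fin n → ℂ)) = ω x ∧
      (L.symm : (Fin n → ℂ) →L[ℂ] (Fin n → ℂ)) = A x := by
    obtain ⟨u, hu⟩ := (hball hx).2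
    refine ⟨ContinuousLinearEquiv.unitsEquiv ℂ _ u⁻¹, ?_, ?_⟩
    · rw [hω_def]
      simp only [← hu, Ring.inverse_unit]
      rfl
    · rw [← hu]
      rfl
  obtain ⟨L, hL, -⟩ := hequiv haB
  have hstrict : HasStrictFDerivAt (fun y => f y - f a)
      (L : (Fin n → ℂ) →L[ℂ] (Fin n → ℂ)) a := by
    rw [hL]
    refine hasStrictFDerivAt_of_hasFDerivAt_of_continuousAt ?_ (hω haB).continuousAt
    filter_upwards [Metric.isOpen_ball.mem_nhds haB] with y hy using hφ hy
  let e := (hstrict.toOpenPartialHomeomorph _).restrOpen (Metric.ball a r) Metric.isOpen_ball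
  have he : ∀ x, e x = f x - f a := fun _ => rfl
  have hea : a ∈ e.source := ⟨hstrict.mem_toOpenPartialHomeomorph_source, haB⟩
  have he0 : e a = 0 := by simp [he]
  have hmem {z} (hz : z ∈ e.target) : e.symm z ∈ Metric.ball a r := (e.map_target hz).2
  have hψ {z} (hz : z ∈ e.target) : HasFDerivAt e.symm (A (e.symm z)) z := by
    obtain ⟨M, hM, hM'⟩ := hequiv (hmem hz)
    rw [← hM']
    refine e.hasFDerivAt_symm hz ?_
    rw [hM]
    exact hφ (hmem hz)
  refine ⟨e.target, e.symm, e.open_target, he0 ▸ e.map_source hea, ?_,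
    fun z hz => (hball (hmem hz)).1, e.symm.injOn,
    fun z hz => (hψ hz).differentiableAt.differentiableWithinAt, ?_, ?_, ?_⟩
  · rw [← he0, e.left_inv hea]
  · rw [e.symm_image_target_eq_source]
    exact e.open_source
  · intro z hz
    obtain ⟨M, -, hM⟩ := hequiv (hmem hz)
    rw [(hψ hz).fderiv, ← hM]
    exact M.symm.bijective
  · intro z hz k
    rw [(hψ hz).fderiv]
    exact frameMap_single _ k
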